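/- For every natural number N ≥ 6 and every index i ∈ {1,…,6}, the i-th diagonal entry of T_N(0) exceeds the sum of the absolute values of the off-diagonal entries in its row by more than f(N): T_N(0)_{ii} − ∑_{j≠i} |T_N(0)_{ij}| > f(N), where f(N) = 1 − (2^{1−N} + (2/3)^N·(2+√3) + (1/3)^N·(12+6√3)). -/

import Mathlib

open Matrix

noncomputable section

/-- `a = 2^{-N}` -/
def a (N : ℕ) : ℝ := (2 : ℝ)⁻¹ ^ N

/-- `b = (-2)^{-N}` -/
def b (N : ℕ) : ℝ := (-2 : ℝ)⁻¹ ^ N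

/-- `c = (2/3)^N` -/
def c (N : ℕ) : ℝ := (2 / 3 : ℝ) ^ N

def M1 (N : ℕ) : Matrix (Fin 3) (Fin 3) ℝ :=
  !![1, a N, a N; a N, 1, b N; a N, b N, 1]

def δ1 (N : ℕ) : Matrix (Fin 3) (Fin 3) ℝ :=
  !![0, a N, a N; a N, (a N) ^ 2, (a N) ^ 2; a N, (a N) ^ 2, (a N) ^ 2]

def δ2 (N : ℕ) : Matrix (Fin 3) (Fin 3) ℝ :=
  !![(a N) ^ 2, a N, a N * b N; a N, 0, b N; a N * b N, b N, (b N) ^ 2]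

def δ3 (N : ℕ) : Matrix (Fin 3) (Fin 3) ℝ :=
  !![(a N) ^ 2, a N * b N, a N; a N * b N, (b N) ^ 2, b N; a N, b N, 0]

def Mx (N : ℕ) : Matrix (Fin 3) (Fin 3) ℝ :=
  (Real.sqrt 3 * c N) • (!![0, 0, 0; 0, -1, 0; 0, 0, 1] + δ3 N - δ2 N)

def Mz (N : ℕ) : Matrix (Fin 3) (Fin 3) ℝ :=
  c N • (!![-2, 0, 0; 0, 1, 0; 0, 0, 1] - (2 : ℝ) • δ1 N + δ2 N + δ3 N)

def S (x : Fin 3 → ℝ) : Matrix (Fin 3) (Fin 3) ℝ :=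
  !![0, x 0, x 1; -x 0, 0, x 2; -x 1, -x 2, 0]

/-- The 6×6 Choi-matrix representation `T_N(x)` in 2×2 block form. -/
def T (N : ℕ) (x : Fin 3 → ℝ) : Matrix (Fin 3 ⊕ Fin 3) (Fin 3 ⊕ Fin 3) ℝ :=
  Matrix.fromBlocks (M1 N + Mz N) (Mx N + S x) (Mx N - S x) (M1 N - Mz N)

end

noncomputable def f (N : ℕ) : ℝ :=
  1 - ((2 : ℝ) ^ ((1 : ℤ) - (N : ℤ)) + (2 / 3 : ℝ) ^ N * (2 + Real.sqrt 3)
      + (1 / 3 : ℝ) ^ N * (12 + 6 * Real.sqrt 3))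

theorem aux_b (N : ℕ) : b N = a N ∨ b N = - a N := by
  rcases Nat.even_or_odd N with h | h
  · left; unfold a b; rw [inv_neg, h.neg_pow]
  · right; unfold a b; rw [inv_neg, h.neg_pow]

theorem aux_sum (g : Fin 3 ⊕ Fin 3 → ℝ) (i : Fin 3 ⊕ Fin 3) :
    ∑ j ∈ Finset.univ.erase i, g j =
      g (.inl 0) + g (.inl 1) + g (.inl 2) + g (.inr 0) + g (.inr 1) + g (.inr 2) - g i := by
  have := Finset.sum_erase_add Finset.univ g (Finset.mem_univ i)
  rw [Fintype.sum_sum_type, Fin.sum_univ_three, Fin.sum_univ_three] at this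
  linarith

theorem aux_f (N : ℕ) : f N = 1 - (2 * a N + c N * (2 + Real.sqrt 3)
    + c N * a N * (12 + 6 * Real.sqrt 3)) := by
  have h1 : (2 : ℝ) ^ ((1 : ℤ) - (N : ℤ)) = 2 * a N := by
    rw [zpow_sub₀ (by norm_num)]; simp [a, div_eq_mul_inv]
  have h2 : (1 / 3 : ℝ) ^ N = c N * a N := by
    unfold c a; rw [← mul_pow]; norm_num
  unfold f; rw [h1, h2]; rfl

set_option maxHeartbeats 4000000 in
theorem stmt_6 (N : ℕ) (hN : 6 ≤ N) (i : Fin 3 ⊕ Fin 3) :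
    f N < T N 0 i i - ∑ j ∈ Finset.univ.erase i, |T N 0 i j| := by
  rw [aux_sum, aux_f]
  have ha0 : 0 < a N := by unfold a; positivity
  have ha1 : a N ≤ 1 := by unfold a; exact pow_le_one₀ (by norm_num) (by norm_num)
  have hc0 : 0 < c N := by unfold c; positivity
  have hs0 : 0 < Real.sqrt 3 := by positivity
  have hb := aux_b N
  rcases i with i | i <;> fin_cases i <;>
    simp [T, M1, Mx, Mz, S, δ1, δ2, δ3, -abs_mul]
  all_goals
    generalize a N = a at *
    generalize b N = b at *
    generalize c N = c at *
    generalize Real.sqrt 3 = s at *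
  all_goals
    have p0 : 0 < c * a := by positivity
    have q0 : 0 < c * a ^ 2 := by positivity
    have q1 : c * a ^ 2 ≤ c * a := by nlinarith
    have u0 : 0 < s * c := by positivity
    have r0 : 0 < s * c * a := by positivity
    have t0 : 0 < s * c * a ^ 2 := by positivity
    have t1 : s * c * a ^ 2 ≤ s * c * a := by nlinarith
    have t2 : s * c * a ≤ s * c := by nlinarith
    have e1 : |a + c * (-(2 * a) + a + a * b)| ≤ a + 2 * (c * a) := by
      rcases hb with rfl | rfl <;> rw [abs_le] <;> constructor <;> nlinarith
    have e2 : |a + c * (-(2 * a) + a * b + a)| ≤ a + 2 * (c * a) := by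
      rcases hb with rfl | rfl <;> rw [abs_le] <;> constructor <;> nlinarith
    have e3 : |a - c * (-(2 * a) + a + a * b)| ≤ a + 2 * (c * a) := by
      rcases hb with rfl | rfl <;> rw [abs_le] <;> constructor <;> nlinarith
    have e4 : |a - c * (-(2 * a) + a * b + a)| ≤ a + 2 * (c * a) := by
      rcases hb with rfl | rfl <;> rw [abs_le] <;> constructor <;> nlinarith
    have e5 : |b + c * (-(2 * a ^ 2) + b + b)| ≤ a + 4 * (c * a) := by
      rcases hb with rfl | rfl <;> rw [abs_le] <;> constructor <;> nlinarith
    have e6 : |b - c * (-(2 * a ^ 2) + b + b)| ≤ a + 4 * (c * a) := by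
      rcases hb with rfl | rfl <;> rw [abs_le] <;> constructor <;> nlinarith
    have e7 : |s * c * (a * b - a)| ≤ 2 * (s * c * a) := by
      rcases hb with rfl | rfl <;> rw [abs_le] <;> constructor <;> nlinarith
    have e8 : |s * c * (a - a * b)| ≤ 2 * (s * c * a) := by
      rcases hb with rfl | rfl <;> rw [abs_le] <;> constructor <;> nlinarith
    have hb2 : b ^ 2 = a ^ 2 := by rcases hb with rfl | rfl <;> ring
    try rw [hb2]
    have e9 : |s * c * (-1 + a ^ 2)| ≤ s * c := by
      rw [abs_le]; constructor <;> nlinarith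
    have e10 : |s * c * (1 - a ^ 2)| ≤ s * c := by
      rw [abs_le]; constructor <;> nlinarith
    nlinarith
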